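/- arXiv:math/0610653 — 4 statements merged into one kernel-verified Lean document; each statement's English description precedes it below -/
import Mathlib

section
/- Let r1, r2 > 0 and set r_* = √(2 r1 r2/(r1+r2)). There exists ε₀ > 0 such that for all 0 < ε < ε₀, the quadratic equation (r1+r2+ε)·x² + (r2² − r1² − (r1+r2+ε)²)·x + r1²·(r1+r2+ε) = 0 has two real roots x1 < x2, and each root x_j satisfies (1/2)·r_*·√ε ≤ |r1 − x_j| ≤ 2·r_*·√ε. -/
/-!
Put `x = r1 + y` and `k = ε (2 r2 + ε)`. The quadratic becomes
`p(y) = (r1 + r2 + ε) y² - k y - r1 k`. To leading order `k ≈ 2 r2 ε`, so the roots are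
`y ≈ ± t` with `t = r_* √ε`, that is `t² = 2 r1 r2 ε / (r1 + r2)`. For `ε < min r2 (r1 / 8)` one
has `t ≤ r1 / 2`, whence `p ≤ 0` at `± t / 2` and `p ≥ 0` at `± 2 t`; the intermediate value
theorem then gives a root in each of `[-2t, -t/2]` and `[t/2, 2t]`.
-/


/-- For `r1, r2 > 0` and `r_* = √(2r1r2/(r1+r2))`, for all sufficiently small `ε > 0`
the quadratic `(r1+r2+ε)x² + (r2² - r1² - (r1+r2+ε)²)x + r1²(r1+r2+ε) = 0` has two
real roots `x1 < x2`, each satisfying `(1/2)r_*√ε ≤ |r1 - x_j| ≤ 2r_*√ε`. -/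
theorem quadratic_roots_estimate (r1 r2 : ℝ) (hr1 : 0 < r1) (hr2 : 0 < r2) :
    ∃ ε₀ > 0, ∀ ε : ℝ, 0 < ε → ε < ε₀ →
      ∃ x1 x2 : ℝ, x1 < x2 ∧
        (r1 + r2 + ε) * x1 ^ 2 + (r2 ^ 2 - r1 ^ 2 - (r1 + r2 + ε) ^ 2) * x1
          + r1 ^ 2 * (r1 + r2 + ε) = 0 ∧
        (r1 + r2 + ε) * x2 ^ 2 + (r2 ^ 2 - r1 ^ 2 - (r1 + r2 + ε) ^ 2) * x2
          + r1 ^ 2 * (r1 + r2 + ε) = 0 ∧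
        (1 / 2) * Real.sqrt (2 * r1 * r2 / (r1 + r2)) * Real.sqrt ε ≤ |r1 - x1| ∧
        |r1 - x1| ≤ 2 * Real.sqrt (2 * r1 * r2 / (r1 + r2)) * Real.sqrt ε ∧
        (1 / 2) * Real.sqrt (2 * r1 * r2 / (r1 + r2)) * Real.sqrt ε ≤ |r1 - x2| ∧
        |r1 - x2| ≤ 2 * Real.sqrt (2 * r1 * r2 / (r1 + r2)) * Real.sqrt ε := by
  refine ⟨min r2 (r1 / 8), by positivity, fun ε hε hlt => ?_⟩
  have hε2 : ε < r2 := hlt.trans_le (min_le_left _ _)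
  have hε1 : ε < r1 / 8 := hlt.trans_le (min_le_right _ _)
  have hs : 0 < r1 + r2 := by positivity
  have hpos : 0 < Real.sqrt (2 * r1 * r2 / (r1 + r2)) * Real.sqrt ε := by positivity
  have hsq : (r1 + r2) * (Real.sqrt (2 * r1 * r2 / (r1 + r2)) * Real.sqrt ε) ^ 2
      = 2 * r1 * r2 * ε := by
    rw [mul_pow, Real.sq_sqrt (by positivity), Real.sq_sqrt hε.le]
    field_simp
  simp only [mul_assoc (1 / 2 : ℝ), mul_assoc (2 : ℝ) (Real.sqrt _)]
  generalize Real.sqrt (2 * r1 * r2 / (r1 + r2)) * Real.sqrt ε = t at hpos hsq ⊢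
  have ht : t ≤ r1 / 2 := by
    have h1 : (r1 + r2) * t ^ 2 ≤ (r1 + r2) * (r1 / 2) ^ 2 := by
      rw [hsq]
      nlinarith [mul_pos hr1 hr2, mul_pos (mul_pos hr1 hr2) (sub_pos.2 hε1), pow_pos hr1 3]
    exact le_of_sq_le_sq (le_of_mul_le_mul_left h1 hs) (by positivity)
  obtain ⟨k, hk⟩ : ∃ k, k = ε * (2 * r2 + ε) := ⟨_, rfl⟩
  have hk1 : 2 * r2 * ε ≤ k := by nlinarith
  have hk2 : k ≤ 3 * r2 * ε := by nlinarith
  have hk0 : 0 < k := by rw [hk]; positivity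
  have hL1 : 2 * r1 * r2 * ε ≤ (r1 + r2 + ε) * t ^ 2 := by nlinarith [mul_pos hε (pow_pos hpos 2)]
  have hL2 : (r1 + r2 + ε) * t ^ 2 ≤ 4 * r1 * r2 * ε := by
    nlinarith [mul_pos (show 0 < r1 + r2 - ε by linarith) (pow_pos hpos 2)]
  have hkt : k * t ≤ k * (r1 / 2) := mul_le_mul_of_nonneg_left ht hk0.le
  have hkt0 : 0 < k * t := mul_pos hk0 hpos
  have hk1' : r1 * (2 * r2 * ε) ≤ r1 * k := mul_le_mul_of_nonneg_left hk1 hr1.le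
  have hk2' : r1 * k ≤ r1 * (3 * r2 * ε) := mul_le_mul_of_nonneg_left hk2 hr1.le
  have hP : 0 < r1 * r2 * ε := by positivity
  have key : ∀ y, (r1 + r2 + ε) * y ^ 2 - k * y - r1 * k = 0 →
      (r1 + r2 + ε) * (r1 + y) ^ 2 + (r2 ^ 2 - r1 ^ 2 - (r1 + r2 + ε) ^ 2) * (r1 + y)
          + r1 ^ 2 * (r1 + r2 + ε) = 0 := by
    intro y hy
    rw [← hy, hk]
    ring
  have hcont : Continuous fun y : ℝ => (r1 + r2 + ε) * y ^ 2 - k * y - r1 * k := by fun_prop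
  obtain ⟨y1, ⟨h1l, h1u⟩, hy1⟩ := intermediate_value_Icc' (show -(2 * t) ≤ -(t / 2) by linarith)
    hcont.continuousOn (show (0 : ℝ) ∈ _ from ⟨by nlinarith, by nlinarith⟩)
  obtain ⟨y2, ⟨h2l, h2u⟩, hy2⟩ := intermediate_value_Icc (show t / 2 ≤ 2 * t by linarith)
    hcont.continuousOn (show (0 : ℝ) ∈ _ from ⟨by nlinarith, by nlinarith⟩)
  have e1 : |r1 - (r1 + y1)| = -y1 := by rw [sub_add_cancel_left, abs_of_pos (by linarith)]
  have e2 : |r1 - (r1 + y2)| = y2 := by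
    rw [sub_add_cancel_left, abs_neg, abs_of_pos (by linarith)]
  refine ⟨r1 + y1, r1 + y2, by linarith, key y1 hy1, key y2 hy2, ?_⟩
  rw [e1, e2]
  refine ⟨?_, ?_, ?_, ?_⟩ <;> linarith
end

section
/- Let r1, r2 > 0 and r_* = √(2 r1 r2/(r1+r2)). There exists ε₀ > 0 such that for all 0 < ε < ε₀ the following holds: let x1 be the smaller root of (r1+r2+ε)·x² + (r2² − r1² − (r1+r2+ε)²)·x + r1²·(r1+r2+ε) = 0, and for t ∈ [0, r1] define F(t) = r1² / ((r1+r2+ε) − r2²/(r1+r2+ε − t)). Then |F(t) − x1| ≤ |t − x1| / (1 + √ε / r_*). -/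
/-!
Write `L = r1 + r2 + ε` and `D(t) = L(L - t) - r2²`. Then `F(t) = r1²(L - t)/D(t)` is a Möbius map
of determinant `r1² r2²` up to sign, so `F(t) - F(s) = r1² r2² (t - s)/(D(t) D(s))`. The quadratic
equation says that `F(x1) = x1`; hence the contraction ratio at `t` is `r1² r2²/(D(t) D(x1))`.
For `t ≤ r1` one has `D(t) ≥ r1 r2`. Since `x1` is the smaller root,
`2 D(x1) = L² - r1² - r2² + √Δ`, where
`Δ = ε(2 r1 + ε)(2 r2 + ε)(2 r1 + 2 r2 + ε)` is the discriminant, and this gives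
`D(x1) ≥ r1 r2 (1 + √ε/r_*)`. The estimates hold for every `ε > 0`.
-/

/-- The denominator of the Möbius map at the smaller fixed point is at least `r1 r2 (1 + σ)`, where
`σ` stands for `√ε / r_*`. -/
lemma denom_fixed_point_lower (r1 r2 ε x1 σ : ℝ) (hr1 : 0 < r1) (hr2 : 0 < r2) (hε : 0 < ε)
    (hσ2 : 2 * r1 * r2 * σ ^ 2 = ε * (r1 + r2))
    (hx : (r1 + r2 + ε) * x1 ^ 2 + (r2 ^ 2 - r1 ^ 2 - (r1 + r2 + ε) ^ 2) * x1
          + r1 ^ 2 * (r1 + r2 + ε) = 0)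
    (hmin : ∀ y : ℝ,
          (r1 + r2 + ε) * y ^ 2 + (r2 ^ 2 - r1 ^ 2 - (r1 + r2 + ε) ^ 2) * y
            + r1 ^ 2 * (r1 + r2 + ε) = 0 → x1 ≤ y) :
    r1 * r2 * (1 + σ) ≤ (r1 + r2 + ε) * (r1 + r2 + ε - x1) - r2 ^ 2 := by
  have hL : 0 < r1 + r2 + ε := by positivity
  -- The other root is given by Vieta's formula for the sum.
  have hy := hmin (((r1 + r2 + ε) ^ 2 + r1 ^ 2 - r2 ^ 2) / (r1 + r2 + ε) - x1) (by
    field_simp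
    linear_combination (r1 + r2 + ε) * hx)
  have hw : 0 ≤ (r1 + r2 + ε) ^ 2 + r1 ^ 2 - r2 ^ 2 - 2 * (r1 + r2 + ε) * x1 := by
    have h2 : 2 * x1 ≤ ((r1 + r2 + ε) ^ 2 + r1 ^ 2 - r2 ^ 2) / (r1 + r2 + ε) := by linarith
    rw [le_div_iff₀ hL] at h2
    linarith
  have hw2 : ((r1 + r2 + ε) ^ 2 + r1 ^ 2 - r2 ^ 2 - 2 * (r1 + r2 + ε) * x1) ^ 2
      = ε * (2 * r1 + ε) * (2 * r2 + ε) * (2 * r1 + 2 * r2 + ε) := by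
    linear_combination 4 * (r1 + r2 + ε) * hx
  have hΔ : (2 * r1 * r2 * σ) ^ 2
      ≤ ((r1 + r2 + ε) ^ 2 + r1 ^ 2 - r2 ^ 2 - 2 * (r1 + r2 + ε) * x1) ^ 2 := by
    have h1 : (2 * r1 * r2 * σ) ^ 2 = ε * r1 * (2 * r2) * (r1 + r2) := by
      linear_combination 2 * r1 * r2 * hσ2
    rw [hw2, h1]
    gcongr ε * ?_ * ?_ * ?_ <;> linarith
  have hle := abs_le_of_sq_le_sq' hΔ hw
  nlinarith [hle.2, mul_pos hε hr1, mul_pos hε hr2, mul_pos hε hε]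


/-- For `r1, r2 > 0` and `r_* = √(2r1r2/(r1+r2))`, for all sufficiently small `ε > 0`:
if `x1` is the smaller root of the quadratic
`(r1+r2+ε)x² + (r2² - r1² - (r1+r2+ε)²)x + r1²(r1+r2+ε) = 0` and for `t ∈ [0, r1]`
one sets `F(t) = r1²/((r1+r2+ε) - r2²/(r1+r2+ε-t))`, then
`|F(t) - x1| ≤ |t - x1|/(1 + √ε/r_*)`. -/
theorem iteration_map_contracts (r1 r2 : ℝ) (hr1 : 0 < r1) (hr2 : 0 < r2) :
    ∃ ε₀ > 0, ∀ ε : ℝ, 0 < ε → ε < ε₀ →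
      ∀ x1 : ℝ,
        (r1 + r2 + ε) * x1 ^ 2 + (r2 ^ 2 - r1 ^ 2 - (r1 + r2 + ε) ^ 2) * x1
          + r1 ^ 2 * (r1 + r2 + ε) = 0 →
        (∀ y : ℝ,
          (r1 + r2 + ε) * y ^ 2 + (r2 ^ 2 - r1 ^ 2 - (r1 + r2 + ε) ^ 2) * y
            + r1 ^ 2 * (r1 + r2 + ε) = 0 → x1 ≤ y) →
        ∀ t : ℝ, 0 ≤ t → t ≤ r1 →
          |r1 ^ 2 / ((r1 + r2 + ε) - r2 ^ 2 / (r1 + r2 + ε - t)) - x1| ≤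
            |t - x1| / (1 + Real.sqrt ε / Real.sqrt (2 * r1 * r2 / (r1 + r2))) := by
  refine ⟨1, one_pos, fun ε hε _ x1 hx hmin t _ ht => ?_⟩
  have hr : 0 < r1 * r2 := mul_pos hr1 hr2
  set σ := Real.sqrt ε / Real.sqrt (2 * r1 * r2 / (r1 + r2)) with hσ
  have hσ0 : 0 ≤ σ := by positivity
  have hσ2 : 2 * r1 * r2 * σ ^ 2 = ε * (r1 + r2) := by
    rw [hσ, div_pow, Real.sq_sqrt hε.le, Real.sq_sqrt (by positivity)]
    field_simp
  have hDx := denom_fixed_point_lower r1 r2 ε x1 σ hr1 hr2 hε hσ2 hx hmin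
  have hDt : r1 * r2 ≤ (r1 + r2 + ε) * (r1 + r2 + ε - t) - r2 ^ 2 := by
    have h1 : (r1 + r2 + ε) * (r2 + ε) ≤ (r1 + r2 + ε) * (r1 + r2 + ε - t) := by
      gcongr; linarith
    nlinarith [mul_pos hε hr1, mul_pos hε hr2, mul_pos hε hε]
  have hLt : 0 < r1 + r2 + ε - t := by linarith
  have hprod : r1 ^ 2 * r2 ^ 2 * (1 + σ) ≤ ((r1 + r2 + ε) * (r1 + r2 + ε - t) - r2 ^ 2)
      * ((r1 + r2 + ε) * (r1 + r2 + ε - x1) - r2 ^ 2) := by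
    calc r1 ^ 2 * r2 ^ 2 * (1 + σ) = (r1 * r2) * (r1 * r2 * (1 + σ)) := by ring
      _ ≤ _ := by gcongr; linarith
  have hDx0 : 0 < (r1 + r2 + ε) * (r1 + r2 + ε - x1) - r2 ^ 2 := lt_of_lt_of_le (by positivity) hDx
  have hDt0 : 0 < (r1 + r2 + ε) * (r1 + r2 + ε - t) - r2 ^ 2 := hr.trans_le hDt
  clear_value σ
  generalize r1 + r2 + ε = L at *
  have hF : r1 ^ 2 / (L - r2 ^ 2 / (L - t)) - x1
      = (t - x1) * (r1 ^ 2 * r2 ^ 2 / ((L * (L - t) - r2 ^ 2) * (L * (L - x1) - r2 ^ 2))) := by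
    have e1 : r1 ^ 2 / (L - r2 ^ 2 / (L - t)) = r1 ^ 2 * (L - t) / (L * (L - t) - r2 ^ 2) := by
      rw [sub_div' hLt.ne', div_div_eq_mul_div]
    -- The quadratic equation is the fixed-point equation for `x1`.
    have e2 : x1 = r1 ^ 2 * (L - x1) / (L * (L - x1) - r2 ^ 2) := by
      rw [eq_div_iff hDx0.ne']
      linear_combination -hx
    rw [e1]
    nth_rewrite 1 [e2]
    rw [div_sub_div _ _ hDt0.ne' hDx0.ne', ← mul_div_assoc]
    congr 1
    ring
  rw [hF, abs_mul, abs_of_pos (a := r1 ^ 2 * r2 ^ 2 / _) (by positivity), div_eq_mul_inv |t - x1|]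
  gcongr
  rw [← one_div, div_le_div_iff₀ (by positivity) (by positivity)]
  linarith
end

section
/- Let r1, r2 > 0 and r_* = √(2 r1 r2/(r1+r2)). There exists ε₀ > 0 such that for all 0 < ε < ε₀ the following holds: let x1 be the smaller root of (r1+r2+ε)·x² + (r2² − r1² − (r1+r2+ε)²)·x + r1²·(r1+r2+ε) = 0, define the sequence t_0 = r1 and t_{n+1} = r1² / ((r1+r2+ε) − r2²/(r1+r2+ε − t_n)). Then for every natural number n ≥ 8·r_*/√ε one has |t_n − x1| ≤ (r_*/4)·√ε. -/
/-!
Write `L = r1 + r2 + ε` and `q t = L * (L - t) - r2 ^ 2`. The iteration map is the Möbius map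
`f t = r1 ^ 2 * (L - t) / q t`, and two of its values differ by
`f t - f x = (r1 * r2) ^ 2 * (t - x) / (q t * q x)`. The roots of the quadratic have product
`r1 ^ 2`, so the smaller one satisfies `0 < x1 ≤ r1`, and `x1` is a fixed point of `f`. With
`P = r1 * r2` and `δ = r1 - x1`, one has `q ≥ P` on `t ≤ r1` and `q x1 ≥ P + L * δ`, so each step
multiplies the distance to `x1` by at most `P / (P + L * δ)`. Bernoulli's inequality turns this
into `t n - x1 ≤ δ * P / (P + n * L * δ) ≤ P / (n * L)`. For `n ≥ 8 * r_* / √ε` the right side is at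
most `r_* * √ε / 16`, because `r_* ^ 2 = 2 * P / (r1 + r2)`. No expansion of `x1` in `ε` is needed,
and the bound holds for every `ε > 0`.
-/

/-- The smaller root lies in `(0, r1]`: all roots are positive, and `r1 ^ 2 / x` is a root
whenever `x` is. -/
lemma smaller_root_mem (r1 r2 L x : ℝ) (hr1 : 0 < r1) (hr2 : 0 < r2) (hL : r1 + r2 < L)
    (hx : L * x ^ 2 + (r2 ^ 2 - r1 ^ 2 - L ^ 2) * x + r1 ^ 2 * L = 0)
    (hmin : ∀ y : ℝ, L * y ^ 2 + (r2 ^ 2 - r1 ^ 2 - L ^ 2) * y + r1 ^ 2 * L = 0 → x ≤ y) :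
    0 < x ∧ x ≤ r1 := by
  have hLpos : 0 < L := by linarith
  have hpos : 0 < x := by
    by_contra! h
    have h1 : 0 ≤ (L ^ 2 - r2 ^ 2) * (-x) :=
      mul_nonneg (by nlinarith) (by linarith)
    have h2 : 0 ≤ r1 ^ 2 * (-x) := mul_nonneg (by positivity) (by linarith)
    have h3 : 0 < r1 ^ 2 * L := by positivity
    have h4 : 0 ≤ L * x ^ 2 := by positivity
    nlinarith
  refine ⟨hpos, ?_⟩
  have h := hmin (r1 ^ 2 / x) (by
    field_simp
    linear_combination r1 ^ 2 * hx)
  rw [le_div_iff₀ hpos] at h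
  nlinarith

/-- One step contracts the distance to the fixed point `x` by the factor
`r1 * r2 / (r1 * r2 + L * (r1 - x))`, and keeps the iterate on the same side of `x`. -/
lemma step_contracts (r1 r2 L x t : ℝ) (hr1 : 0 < r1) (hr2 : 0 < r2) (hL : r1 + r2 < L)
    (hx : L * x ^ 2 + (r2 ^ 2 - r1 ^ 2 - L ^ 2) * x + r1 ^ 2 * L = 0)
    (hxt : x ≤ t) (ht : t ≤ r1) :
    0 ≤ r1 ^ 2 / (L - r2 ^ 2 / (L - t)) - x ∧
      (r1 ^ 2 / (L - r2 ^ 2 / (L - t)) - x) * (r1 * r2 + L * (r1 - x)) ≤ r1 * r2 * (t - x) := by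
  have hP : 0 < r1 * r2 := mul_pos hr1 hr2
  have hLt : 0 < L - t := by linarith
  have hqr : r1 * r2 ≤ L * (L - r1) - r2 ^ 2 := by
    nlinarith
  have hc : 0 ≤ L * (r1 - x) := mul_nonneg (by linarith) (by linarith)
  have hqt : r1 * r2 ≤ L * (L - t) - r2 ^ 2 := by nlinarith
  have hqx : r1 * r2 + L * (r1 - x) ≤ L * (L - x) - r2 ^ 2 := by linarith
  have hqt0 : 0 < L * (L - t) - r2 ^ 2 := by linarith
  have hqx0 : 0 < L * (L - x) - r2 ^ 2 := by linarith
  have hf : r1 ^ 2 / (L - r2 ^ 2 / (L - t)) = r1 ^ 2 * (L - t) / (L * (L - t) - r2 ^ 2) := by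
    have : L - r2 ^ 2 / (L - t) = (L * (L - t) - r2 ^ 2) / (L - t) := by field_simp
    rw [this, div_div_eq_mul_div]
  have hdiff : r1 ^ 2 * (L - t) / (L * (L - t) - r2 ^ 2) - x =
      (r1 * r2) ^ 2 * (t - x) / ((L * (L - t) - r2 ^ 2) * (L * (L - x) - r2 ^ 2)) := by
    rw [eq_div_iff (by positivity), sub_mul, ← mul_assoc, div_mul_cancel₀ _ hqt0.ne']
    linear_combination (L * (L - t) - r2 ^ 2) * hx
  rw [hf, hdiff]
  have htx : 0 ≤ t - x := by linarith
  refine ⟨by positivity, ?_⟩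
  rw [div_mul_eq_mul_div, div_le_iff₀ (by positivity)]
  have hprod : r1 * r2 * (r1 * r2 + L * (r1 - x)) ≤
      (L * (L - t) - r2 ^ 2) * (L * (L - x) - r2 ^ 2) :=
    mul_le_mul hqt hqx (by linarith) hqt0.le
  have := mul_le_mul_of_nonneg_left hprod (mul_nonneg hP.le htx)
  linarith

/-- For `r1, r2 > 0` and `r_* = √(2r1r2/(r1+r2))`, for all sufficiently small `ε > 0`:
if `x1` is the smaller root of
`(r1+r2+ε)x² + (r2² - r1² - (r1+r2+ε)²)x + r1²(r1+r2+ε) = 0` and the sequence `t`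
is given by `t 0 = r1`, `t (n+1) = r1²/((r1+r2+ε) - r2²/(r1+r2+ε - t n))`, then
`|t n - x1| ≤ (r_*/4)√ε` for every `n ≥ 8 r_*/√ε`. -/
theorem iterates_close_to_fixed_point (r1 r2 : ℝ) (hr1 : 0 < r1) (hr2 : 0 < r2) :
    ∃ ε₀ > 0, ∀ ε : ℝ, 0 < ε → ε < ε₀ →
      ∀ x1 : ℝ,
        (r1 + r2 + ε) * x1 ^ 2 + (r2 ^ 2 - r1 ^ 2 - (r1 + r2 + ε) ^ 2) * x1
          + r1 ^ 2 * (r1 + r2 + ε) = 0 →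
        (∀ y : ℝ,
          (r1 + r2 + ε) * y ^ 2 + (r2 ^ 2 - r1 ^ 2 - (r1 + r2 + ε) ^ 2) * y
            + r1 ^ 2 * (r1 + r2 + ε) = 0 → x1 ≤ y) →
        ∀ t : ℕ → ℝ, t 0 = r1 →
          (∀ n : ℕ, t (n + 1) = r1 ^ 2 / ((r1 + r2 + ε) - r2 ^ 2 / (r1 + r2 + ε - t n))) →
          ∀ n : ℕ, 8 * Real.sqrt (2 * r1 * r2 / (r1 + r2)) / Real.sqrt ε ≤ (n : ℝ) →
            |t n - x1| ≤ Real.sqrt (2 * r1 * r2 / (r1 + r2)) / 4 * Real.sqrt ε := by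
  refine ⟨1, one_pos, fun ε hε _ x1 hx hmin t h0 hstep n hn => ?_⟩
  set L := r1 + r2 + ε with hLdef
  have hL : r1 + r2 < L := by linarith
  obtain ⟨-, hxr⟩ := smaller_root_mem r1 r2 L x1 hr1 hr2 hL hx hmin
  have hP : 0 < r1 * r2 := mul_pos hr1 hr2
  have hc : 0 ≤ L * (r1 - x1) := mul_nonneg (by linarith) (by linarith)
  have key : ∀ k : ℕ, 0 ≤ t k - x1 ∧
      (t k - x1) * (r1 * r2 + k * (L * (r1 - x1))) ≤ (r1 - x1) * (r1 * r2) := by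
    intro k
    induction k with
    | zero => simp [h0, hxr]
    | succ k ih =>
      obtain ⟨hd, hb⟩ := ih
      have hkc : 0 ≤ (k : ℝ) * (L * (r1 - x1)) := by positivity
      have htr : t k ≤ r1 := by
        have : (t k - x1) * (r1 * r2) ≤ (r1 - x1) * (r1 * r2) := by
          nlinarith [mul_nonneg hd hkc]
        linarith [le_of_mul_le_mul_right this hP]
      obtain ⟨hd', hb'⟩ := step_contracts r1 r2 L x1 (t k) hr1 hr2 hL hx (by linarith) htr
      rw [← hstep k] at hd' hb'
      refine ⟨hd', ?_⟩
      push_cast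
      generalize L * (r1 - x1) = c at *
      have e1 := mul_le_mul_of_nonneg_right hb' (by linarith : 0 ≤ r1 * r2 + k * c)
      have e2 := mul_le_mul_of_nonneg_left hb hP.le
      -- the Bernoulli step `P * (P + (k + 1) * c) ≤ (P + c) * (P + k * c)`
      have e3 : 0 ≤ (t (k + 1) - x1) * (k * c * c) := by positivity
      refine le_of_mul_le_mul_left ?_ hP
      linarith
  obtain ⟨hd, hb⟩ := key n
  rw [abs_of_nonneg hd]
  have hr : 0 < 2 * r1 * r2 / (r1 + r2) := by positivity
  have hs2 : Real.sqrt (2 * r1 * r2 / (r1 + r2)) ^ 2 = 2 * r1 * r2 / (r1 + r2) :=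
    Real.sq_sqrt hr.le
  have hs : 0 < Real.sqrt (2 * r1 * r2 / (r1 + r2)) := Real.sqrt_pos.2 hr
  have he : 0 < Real.sqrt ε := Real.sqrt_pos.2 hε
  generalize Real.sqrt (2 * r1 * r2 / (r1 + r2)) = s at *
  generalize Real.sqrt ε = e at *
  rw [div_le_iff₀ he] at hn
  rw [eq_div_iff (by positivity)] at hs2
  -- `key` without its term `(t n - x1) * (r1 * r2)` has the common factor `r1 - x1`
  have hnL : (t n - x1) * (n * L) ≤ r1 * r2 := by
    rcases hxr.eq_or_lt with heq | hlt
    · have : (t n - x1) * (r1 * r2) ≤ 0 := by simpa [heq] using hb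
      have h0' : t n - x1 = 0 := le_antisymm (nonpos_of_mul_nonpos_left this hP) hd
      rw [h0', zero_mul]; exact hP.le
    · refine le_of_mul_le_mul_left ?_ (sub_pos.2 hlt)
      nlinarith [mul_nonneg hd hP.le]
  have h1 : (t n - x1) * (8 * s * L) ≤ r1 * r2 * e := by
    calc (t n - x1) * (8 * s * L) ≤ (t n - x1) * (n * e * L) := by gcongr
      _ = (t n - x1) * (n * L) * e := by ring
      _ ≤ r1 * r2 * e := by gcongr
  have h2 : (t n - x1) * (8 * s * (r1 + r2)) ≤ (t n - x1) * (8 * s * L) := by gcongr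
  have hpos : 0 < 8 * s * (r1 + r2) := by positivity
  refine le_of_mul_le_mul_right ?_ hpos
  have h3 : s / 4 * e * (8 * s * (r1 + r2)) = 4 * (r1 * r2 * e) := by
    linear_combination 2 * e * hs2
  have h4 : 0 ≤ r1 * r2 * e := by positivity
  linarith
end

section
/- Let ρ > r > 0 and r* = √((ρ−r)/(ρr)). There exists ε₀ > 0 such that for all 0 < ε < ε₀, with c = ρ − r − ε, the quadratic c·x² + (r² − ρ² − c²)·x + ρ²·c = 0 has two real roots x1 < x2, and each root x_j satisfies √ε/r* ≤ |x_j − ρ| ≤ 2·√ε/r*. -/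
/-!
Write `x = ρ + y`. The quadratic becomes `c y² - k y - ρ k` with `k = ε (2r + ε)`, so to leading
order `y² ≈ 2 ρ r ε / (ρ - r) = 2 s²`, where `s = √ε / r*`. Since `1 < 2 < 4`, the quadratic is
negative at `y = ±s` and positive at `y = ±2s` once `ε` is small, and the intermediate value
theorem gives one root with `y ∈ [s, 2s]` and one with `y ∈ [-2s, -s]`.
-/


/-- For `ρ > r > 0` and `r* = √((ρ-r)/(ρr))`, for all sufficiently small `ε > 0`,
with `c = ρ - r - ε`, the quadratic `c·x² + (r² - ρ² - c²)·x + ρ²·c = 0` has two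
real roots `x1 < x2`, each satisfying `√ε/r* ≤ |x_j - ρ| ≤ 2√ε/r*`. -/
theorem quadratic_roots_estimate_domain (ρ r : ℝ) (hr : 0 < r) (hρ : r < ρ) :
    ∃ ε₀ > 0, ∀ ε : ℝ, 0 < ε → ε < ε₀ →
      ∃ x1 x2 : ℝ, x1 < x2 ∧
        (ρ - r - ε) * x1 ^ 2 + (r ^ 2 - ρ ^ 2 - (ρ - r - ε) ^ 2) * x1
          + ρ ^ 2 * (ρ - r - ε) = 0 ∧
        (ρ - r - ε) * x2 ^ 2 + (r ^ 2 - ρ ^ 2 - (ρ - r - ε) ^ 2) * x2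
          + ρ ^ 2 * (ρ - r - ε) = 0 ∧
        Real.sqrt ε / Real.sqrt ((ρ - r) / (ρ * r)) ≤ |x1 - ρ| ∧
        |x1 - ρ| ≤ 2 * Real.sqrt ε / Real.sqrt ((ρ - r) / (ρ * r)) ∧
        Real.sqrt ε / Real.sqrt ((ρ - r) / (ρ * r)) ≤ |x2 - ρ| ∧
        |x2 - ρ| ≤ 2 * Real.sqrt ε / Real.sqrt ((ρ - r) / (ρ * r)) := by
  set R := Real.sqrt ((ρ - r) / (ρ * r)) with hR
  have hρ0 : 0 < ρ := hr.trans hρ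
  have hd : 0 < ρ - r := sub_pos.mpr hρ
  have hRpos : 0 < R := Real.sqrt_pos.mpr (by positivity)
  have hR2 : R ^ 2 * (ρ * r) = ρ - r := by
    rw [hR, Real.sq_sqrt (by positivity)]
    field_simp
  -- The two smallness conditions that fix the signs at `y = ±s` and at `y = ±2s`; both are
  -- strict inequalities between continuous functions of `ε` that hold at `ε = 0`.
  have hA : ∀ᶠ ε in nhds (0 : ℝ), (2 * r + ε) * (Real.sqrt ε / R) < ρ * r := by
    refine ContinuousAt.eventually_lt (by fun_prop) (by fun_prop) ?_
    simp only [Real.sqrt_zero, zero_div, mul_zero]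
    positivity
  have hB : ∀ᶠ ε in nhds (0 : ℝ),
      (2 * r + ε) * (ρ + 2 * (Real.sqrt ε / R)) + 4 * (Real.sqrt ε / R) ^ 2 < 4 * (ρ * r) := by
    refine ContinuousAt.eventually_lt (by fun_prop) (by fun_prop) ?_
    simp only [Real.sqrt_zero, zero_div]
    nlinarith [mul_pos hρ0 hr]
  obtain ⟨ε₀, hε₀, hε⟩ := Metric.eventually_nhds_iff.mp (hA.and hB)
  refine ⟨ε₀, hε₀, fun ε hpos hlt => ?_⟩
  obtain ⟨h1, h2⟩ := hε (y := ε) (by rwa [Real.dist_eq, sub_zero, abs_of_pos hpos])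
  simp only [mul_div_assoc]
  have hs : 0 < Real.sqrt ε / R := div_pos (Real.sqrt_pos.mpr hpos) hRpos
  have hs2 : (Real.sqrt ε / R) ^ 2 * (ρ - r) = ε * (ρ * r) := by
    rw [← hR2, div_pow, Real.sq_sqrt hpos.le]
    field_simp
  generalize Real.sqrt ε / R = s at *
  let f : ℝ → ℝ := fun x => (ρ - r - ε) * x ^ 2 + (r ^ 2 - ρ ^ 2 - (ρ - r - ε) ^ 2) * x
    + ρ ^ 2 * (ρ - r - ε)
  have hf : Continuous f := by fun_prop
  have hshift (y : ℝ) :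
      f (ρ + y) = (ρ - r) * y ^ 2 - ε * (y ^ 2 + (2 * r + ε) * y + ρ * (2 * r + ε)) := by
    simp only [f]
    ring
  have hks : 0 < (2 * r + ε) * s := by positivity
  have hρε : 0 < ρ * ε := by positivity
  have hinner (y : ℝ) (hy : y = s ∨ y = -s) : f (ρ + y) ≤ 0 := by
    have e : f (ρ + y) = ε * (ρ * r - (s ^ 2 + (2 * r + ε) * y + ρ * (2 * r + ε))) := by
      rw [hshift]
      rcases hy with hy | hy <;> rw [hy] <;> linear_combination hs2
    rw [e]
    refine mul_nonpos_of_nonneg_of_nonpos hpos.le ?_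
    rcases hy with hy | hy <;> rw [hy] <;> nlinarith [sq_nonneg s]
  have houter (y : ℝ) (hy : y = 2 * s ∨ y = -(2 * s)) : 0 ≤ f (ρ + y) := by
    have e : f (ρ + y) =
        ε * (4 * (ρ * r) - (4 * s ^ 2 + (2 * r + ε) * y + ρ * (2 * r + ε))) := by
      rw [hshift]
      rcases hy with hy | hy <;> rw [hy] <;> linear_combination 4 * hs2
    rw [e]
    refine mul_nonneg hpos.le ?_
    rcases hy with hy | hy <;> rw [hy] <;> nlinarith
  obtain ⟨x1, ⟨hx1l, hx1u⟩, hx1⟩ := intermediate_value_Icc'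
    (show ρ + -(2 * s) ≤ ρ + -s by linarith) hf.continuousOn
    ⟨hinner _ (Or.inr rfl), houter _ (Or.inr rfl)⟩
  obtain ⟨x2, ⟨hx2l, hx2u⟩, hx2⟩ := intermediate_value_Icc
    (show ρ + s ≤ ρ + 2 * s by linarith) hf.continuousOn
    ⟨hinner _ (Or.inl rfl), houter _ (Or.inl rfl)⟩
  have ha1 : |x1 - ρ| = ρ - x1 := by rw [abs_of_neg (by linarith)]; ring
  have ha2 : |x2 - ρ| = x2 - ρ := abs_of_pos (by linarith)
  refine ⟨x1, x2, by linarith, hx1, hx2, ?_⟩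
  rw [ha1, ha2]
  exact ⟨by linarith, by linarith, by linarith, by linarith⟩
end
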